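/- arXiv:math/9912126 — 3 statements merged into one kernel-verified Lean document; each statement's English description precedes it below -/
import Mathlib

section
/- For a finite poset P of cardinality n, define c_k as the maximal cardinality of a union of k chains, and λ_k = c_k - c_{k-1}. Then the sequence (λ_1, λ_2, ...) is weakly decreasing. -/
open Finset

/-- `cMax α k` is the maximal cardinality of a union of `k` pairwise disjoint chains
in the finite poset `α`. -/
noncomputable def cMax (α : Type*) [PartialOrder α] [Fintype α] [DecidableEq α] (k : ℕ) : ℕ :=
  sSup {n : ℕ | ∃ f : Fin k → Finset α,
    (∀ i, IsChain (· ≤ ·) (↑(f i) : Set α)) ∧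
    Pairwise (Function.onFun Disjoint f) ∧
    n = (Finset.univ.biUnion f).card}

/-- `aMax α k` is the maximal cardinality of a union of `k` pairwise disjoint antichains
in the finite poset `α`. -/
noncomputable def aMax (α : Type*) [PartialOrder α] [Fintype α] [DecidableEq α] (k : ℕ) : ℕ :=
  sSup {n : ℕ | ∃ f : Fin k → Finset α,
    (∀ i, IsAntichain (· ≤ ·) (↑(f i) : Set α)) ∧
    Pairwise (Function.onFun Disjoint f) ∧
    n = (Finset.univ.biUnion f).card}

/-- The `k`-th row length of the Greene shape `λ(α)`. -/
noncomputable def lam (α : Type*) [PartialOrder α] [Fintype α] [DecidableEq α] (k : ℕ) : ℕ :=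
  cMax α k - cMax α (k - 1)

/-- The `k`-th column length of the Greene shape, `μ_k = a_k - a_{k-1}`. -/
noncomputable def mu (α : Type*) [PartialOrder α] [Fintype α] [DecidableEq α] (k : ℕ) : ℕ :=
  aMax α k - aMax α (k - 1)

/-!
A family of `k` disjoint chains in a poset with `n` elements is encoded by a matching with at least
`n - k` edges between two copies of the poset: join consecutive elements of each chain, and join
every element missed by the chains to itself. Conversely, the non-loop components of such a matching
are at most `k` chains covering every element without a loop. So `n - c_k` is the least number of
loops of an order matching with at least `n - k` edges.

In the conflict graph between two matchings `M` and `N` (two edges conflict if they share an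
endpoint on the same side) every edge of `M` has at most two neighbours in `N`. Some component
contains more edges of `N` than of `M`, and since a connected graph with `e` edges has at most
`e + 1` vertices, it contains exactly one more. Swapping the two matchings on this component moves
one edge from `N` to `M` without changing the total number of loops, which turns optimal matchings
for `k + 2` and `k` into two matchings for `k + 1`: `c_{k+2} + c_k ≤ 2 c_{k+1}`.
-/

section IndepSetExchange

variable {V : Type*} {G : SimpleGraph V}

theorem card_edgeFinset_le_sum_degree_of_isVertexCover [Fintype G.edgeSet] [G.LocallyFinite]
    {s : Finset V} (hs : G.IsVertexCover s) : #G.edgeFinset ≤ ∑ v ∈ s, G.degree v := by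
  classical
  have edges_subset : G.edgeFinset ⊆ s.biUnion fun v ↦ G.incidenceFinset v := by
    refine fun e he ↦ mem_biUnion.2 ?_
    induction e using Sym2.ind with | _ v w
    rw [SimpleGraph.mem_edgeFinset] at he
    rcases hs he with hv | hw
    · exact ⟨v, hv, by simpa [SimpleGraph.incidenceSet] using he⟩
    · exact ⟨w, hw, by simpa [SimpleGraph.incidenceSet] using he⟩
  calc #G.edgeFinset ≤ ∑ v ∈ s, #(G.incidenceFinset v) :=
        (card_le_card edges_subset).trans card_biUnion_le
    _ = ∑ v ∈ s, G.degree v := by simp only [SimpleGraph.card_incidenceFinset_eq_degree]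

theorem card_connectedComponent_le_sum_degree_add_one [Fintype V] [DecidableRel G.Adj]
    [DecidableEq G.ConnectedComponent] (C : G.ConnectedComponent) {s : Finset V}
    (hs : G.IsVertexCover s) :
    #{v | G.connectedComponentMk v = C} ≤
      (∑ v ∈ s with G.connectedComponentMk v = C, G.degree v) + 1 := by
  classical
  let H := G.induce C.supp
  have cover : H.IsVertexCover (s.subtype (· ∈ C.supp) : Finset C.supp) := fun v w hvw ↦ by
    simpa using hs hvw
  have degree_eq (v : C.supp) : H.degree v = G.degree v := by
    convert SimpleGraph.degree_induce_of_neighborSet_subset fun _ hw ↦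
      (C.mem_supp_congr_adj hw).1 v.2
  calc #{v | G.connectedComponentMk v = C} = Nat.card C.supp := by
        simp [← Fintype.card_subtype, Nat.card_eq_fintype_card]
    _ ≤ Nat.card H.edgeSet + 1 := C.connected_toSimpleGraph.card_vert_le_card_edgeSet_add_one
    _ ≤ (∑ v ∈ s.subtype (· ∈ C.supp), H.degree v) + 1 := by
        rw [Nat.card_eq_fintype_card, ← SimpleGraph.edgeFinset_card]
        gcongr
        exact card_edgeFinset_le_sum_degree_of_isVertexCover cover
    _ = (∑ v ∈ s with G.connectedComponentMk v = C, G.degree v) + 1 := by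
        simp only [degree_eq, sum_subtype_eq_sum_filter (fun v ↦ G.degree v),
          SimpleGraph.ConnectedComponent.mem_supp_iff]

theorem exists_card_fiber_lt_card_fiber {ι κ β : Type*} [DecidableEq β] {s : Finset ι}
    {t : Finset κ} (f : ι → β) (g : κ → β) (h : #s < #t) :
    ∃ b, #{x ∈ s | f x = b} < #{x ∈ t | g x = b} := by
  by_contra! hle
  refine h.not_ge ?_
  calc #t = ∑ b ∈ t.image g, #{x ∈ t | g x = b} := card_eq_sum_card_image g t
    _ ≤ ∑ b ∈ t.image g, #{x ∈ s | f x = b} := sum_le_sum fun b _ ↦ hle b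
    _ = #{x ∈ s | f x ∈ t.image g} := sum_card_fiberwise_eq_card_filter s _ f
    _ ≤ #s := card_filter_le _ _

variable [DecidableEq V] {I J : Finset V}

theorem isIndepSet_sdiff_union_inter {K : Finset V} (hI : G.IsIndepSet I) (hJ : G.IsIndepSet J)
    (hK : ∀ v w, (G.between I J).Adj v w → (v ∈ K ↔ w ∈ K)) :
    G.IsIndepSet (I \ K ∪ J ∩ K : Finset V) := by
  rw [coe_union, SimpleGraph.isIndepSet_iff, Set.pairwise_union]
  refine ⟨hI.mono (coe_subset.2 sdiff_subset), hJ.mono (coe_subset.2 inter_subset_left), ?_⟩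
  intro v hv w hw _
  rw [mem_coe, mem_sdiff] at hv
  rw [mem_coe, mem_inter] at hw
  have not_adj : ¬G.Adj v w := fun hvw ↦ hv.2 ((hK v w ⟨hvw, .inl ⟨hv.1, hw.1⟩⟩).2 hw.2)
  exact ⟨not_adj, fun hwv ↦ not_adj hwv.symm⟩

theorem isVertexCover_between_sdiff (hJ : G.IsIndepSet J) :
    (G.between I J).IsVertexCover (I \ J : Finset V) := by
  rintro v w ⟨hvw, ⟨hv, hw⟩ | ⟨hv, hw⟩⟩
  · exact .inl (mem_coe.2 (mem_sdiff.2 ⟨hv, fun hv' ↦ hJ hv' hw hvw.ne hvw⟩))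
  · exact .inr (mem_coe.2 (mem_sdiff.2 ⟨hw, fun hw' ↦ hJ hv hw' hvw.ne hvw⟩))

theorem exists_card_inter_eq_card_inter_add_one [Finite V] [DecidableRel G.Adj]
    (hJ : G.IsIndepSet J) (hdeg : ∀ v ∈ I, #{w ∈ J | G.Adj v w} ≤ 2) (hcard : #I < #J) :
    ∃ K : Finset V, (∀ v w, (G.between I J).Adj v w → (v ∈ K ↔ w ∈ K)) ∧
      #(J ∩ K) = #(I ∩ K) + 1 := by
  classical
  have := Fintype.ofFinite V
  let H := G.between I J
  obtain ⟨C, hC⟩ := exists_card_fiber_lt_card_fiber H.connectedComponentMk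
    H.connectedComponentMk hcard
  let K : Finset V := {v | H.connectedComponentMk v = C}
  have inter_eq (s : Finset V) : {v ∈ s | H.connectedComponentMk v = C} = s ∩ K := by
    simp only [K, inter_filter, inter_univ]
  have degree_le : ∀ v ∈ I \ J, H.degree v ≤ 2 := by
    intro v hv
    rw [mem_sdiff] at hv
    refine (card_le_card fun w hw ↦ ?_).trans (hdeg v hv.1)
    obtain ⟨hvw, h | h⟩ := (H.mem_neighborFinset v w).1 hw
    · exact mem_filter.2 ⟨h.2, hvw⟩
    · exact absurd h.1 hv.2
  have card_K : #K ≤ #((I \ J) ∩ K) * 2 + 1 := by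
    refine (card_connectedComponent_le_sum_degree_add_one C
      (isVertexCover_between_sdiff hJ)).trans ?_
    gcongr
    rw [inter_eq]
    exact sum_le_card_nsmul _ _ _ fun v hv ↦ degree_le v (mem_of_mem_inter_left hv)
  have card_add_le : #((I \ J) ∩ K) + #(J ∩ K) ≤ #K := by
    have disj : Disjoint ((I \ J) ∩ K) (J ∩ K) :=
      disjoint_sdiff_self_left.mono inter_subset_left inter_subset_left
    rw [← card_union_of_disjoint disj]
    exact card_le_card (union_subset inter_subset_right inter_subset_right)
  have card_le : #((I \ J) ∩ K) ≤ #(I ∩ K) :=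
    card_le_card (inter_subset_inter_right sdiff_subset)
  refine ⟨K, fun v w hvw ↦ ?_, ?_⟩
  · have mk_eq : H.connectedComponentMk v = H.connectedComponentMk w :=
      SimpleGraph.ConnectedComponent.sound hvw.reachable
    simp only [K, mem_filter_univ, mk_eq]
  · have lt : #(I ∩ K) < #(J ∩ K) := by simpa only [inter_eq] using hC
    have le_add_one : #(J ∩ K) ≤ #((I \ J) ∩ K) + 1 := by omega
    omega

theorem exists_isIndepSet_exchange [Finite V] [DecidableRel G.Adj] (hI : G.IsIndepSet I)
    (hJ : G.IsIndepSet J) (hdeg : ∀ v ∈ I, #{w ∈ J | G.Adj v w} ≤ 2) (hcard : #I < #J) :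
    ∃ I' J' : Finset V, G.IsIndepSet I' ∧ G.IsIndepSet J' ∧
      I' ∪ J' = I ∪ J ∧ I' ∩ J' = I ∩ J ∧ #I' = #I + 1 := by
  obtain ⟨K, hK, hKcard⟩ := exists_card_inter_eq_card_inter_add_one hJ hdeg hcard
  refine ⟨I \ K ∪ J ∩ K, J \ K ∪ I ∩ K, isIndepSet_sdiff_union_inter hI hJ hK,
    isIndepSet_sdiff_union_inter hJ hI (by rwa [SimpleGraph.between_comm]), ?_, ?_, ?_⟩
  · ext v
    simp only [mem_union, mem_inter, mem_sdiff]
    tauto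
  · ext v
    simp only [mem_union, mem_inter, mem_sdiff]
    tauto
  · rw [card_union_of_disjoint (disjoint_sdiff_self_left.mono_right inter_subset_right), hKcard,
      ← add_assoc, card_sdiff_add_card_inter]

end IndepSetExchange

open SimpleGraph in
theorem isIndepSet_boxProd_top_iff {α β : Type*} {s : Set (α × β)} :
    ((⊤ : SimpleGraph α) □ (⊤ : SimpleGraph β)).IsIndepSet s ↔
      s.InjOn Prod.fst ∧ s.InjOn Prod.snd := by
  simp only [isIndepSet_iff, Set.Pairwise, Set.InjOn, boxProd_adj, top_adj, Prod.ext_iff]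
  grind

open SimpleGraph in
theorem card_filter_boxProd_top_adj_le_two {α β : Type*}
    [DecidableRel ((⊤ : SimpleGraph α) □ (⊤ : SimpleGraph β)).Adj] {s : Finset (α × β)}
    (hs : ((⊤ : SimpleGraph α) □ (⊤ : SimpleGraph β)).IsIndepSet s) (e : α × β) :
    #{e' ∈ s | ((⊤ : SimpleGraph α) □ (⊤ : SimpleGraph β)).Adj e e'} ≤ 2 := by
  classical
  obtain ⟨inj_fst, inj_snd⟩ := isIndepSet_boxProd_top_iff.1 hs
  have same_fst : #{e' ∈ s | e'.1 = e.1} ≤ 1 := card_le_one.2 fun a ha b hb ↦ by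
    rw [mem_filter] at ha hb
    exact inj_fst ha.1 hb.1 (ha.2.trans hb.2.symm)
  have same_snd : #{e' ∈ s | e'.2 = e.2} ≤ 1 := card_le_one.2 fun a ha b hb ↦ by
    rw [mem_filter] at ha hb
    exact inj_snd ha.1 hb.1 (ha.2.trans hb.2.symm)
  calc #{e' ∈ s | ((⊤ : SimpleGraph α) □ (⊤ : SimpleGraph β)).Adj e e'}
      ≤ #({e' ∈ s | e'.1 = e.1} ∪ {e' ∈ s | e'.2 = e.2}) := by
        refine card_le_card fun e' he' ↦ ?_
        simp only [mem_filter, mem_union, boxProd_adj] at he' ⊢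
        tauto
    _ ≤ 1 + 1 := (card_union_le _ _).trans (add_le_add same_fst same_snd)

/-- A matching between two copies of `α` along the relation `≤`. A family of disjoint chains is
encoded by joining consecutive elements of each chain and adding the loop `(x, x)` for every `x`
outside all chains, so that loops count the elements missed by the family. -/
structure IsOrderMatching {α : Type*} [LE α] (M : Finset (α × α)) : Prop where
  fst_le_snd : ∀ e ∈ M, e.1 ≤ e.2
  injOn_fst : Set.InjOn Prod.fst (M : Set (α × α))
  injOn_snd : Set.InjOn Prod.snd (M : Set (α × α))

namespace IsOrderMatching

theorem exists_exchange {α : Type*} [LE α] [Finite α] [DecidableEq α] {M N : Finset (α × α)}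
    (hM : IsOrderMatching M) (hN : IsOrderMatching N) (hcard : #M < #N) :
    ∃ M' N' : Finset (α × α), IsOrderMatching M' ∧ IsOrderMatching N' ∧
      #M' = #M + 1 ∧ #N' + 1 = #N ∧
      #{e ∈ M' | e.1 = e.2} + #{e ∈ N' | e.1 = e.2} =
        #{e ∈ M | e.1 = e.2} + #{e ∈ N | e.1 = e.2} := by
  classical
  have indep_M := isIndepSet_boxProd_top_iff.2 ⟨hM.injOn_fst, hM.injOn_snd⟩
  have indep_N := isIndepSet_boxProd_top_iff.2 ⟨hN.injOn_fst, hN.injOn_snd⟩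
  obtain ⟨M', N', indep_M', indep_N', union_eq, inter_eq, card_M'⟩ :=
    exists_isIndepSet_exchange indep_M indep_N
      (fun e _ ↦ card_filter_boxProd_top_adj_le_two indep_N e) hcard
  obtain ⟨inj_fst_M', inj_snd_M'⟩ := isIndepSet_boxProd_top_iff.1 indep_M'
  obtain ⟨inj_fst_N', inj_snd_N'⟩ := isIndepSet_boxProd_top_iff.1 indep_N'
  have le_of_mem : ∀ e ∈ M' ∪ N', e.1 ≤ e.2 := fun e he ↦
    (mem_union.1 (union_eq ▸ he)).elim (hM.fst_le_snd e) (hN.fst_le_snd e)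
  refine ⟨M', N', ⟨fun e he ↦ le_of_mem e (mem_union_left _ he), inj_fst_M', inj_snd_M'⟩,
    ⟨fun e he ↦ le_of_mem e (mem_union_right _ he), inj_fst_N', inj_snd_N'⟩, card_M', ?_, ?_⟩
  · have := card_union_add_card_inter M' N'
    rw [union_eq, inter_eq, card_union_add_card_inter] at this
    omega
  · have loops_add (A B : Finset (α × α)) : #{e ∈ A | e.1 = e.2} + #{e ∈ B | e.1 = e.2} =
        #{e ∈ A ∪ B | e.1 = e.2} + #{e ∈ A ∩ B | e.1 = e.2} := by
      rw [filter_union, filter_inter_distrib, card_union_add_card_inter]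
    rw [loops_add M' N', loops_add M N, union_eq, inter_eq]

theorem union {α : Type*} [LE α] [DecidableEq α] {M N : Finset (α × α)} {s t : Finset α}
    (hM : IsOrderMatching M) (hN : IsOrderMatching N) (hMs : M ⊆ s ×ˢ s) (hNt : N ⊆ t ×ˢ t)
    (hst : Disjoint s t) : IsOrderMatching (M ∪ N) := by
  have disj : Disjoint (M : Set (α × α)) N :=
    disjoint_coe.2 ((disjoint_product.2 (.inl hst)).mono hMs hNt)
  refine ⟨fun e he ↦ (mem_union.1 he).elim (hM.fst_le_snd e) (hN.fst_le_snd e), ?_, ?_⟩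
  · rw [coe_union, Set.injOn_union disj]
    exact ⟨hM.injOn_fst, hN.injOn_fst, fun a ha b hb ↦
      disjoint_iff_ne.1 hst _ (mem_product.1 (hMs ha)).1 _ (mem_product.1 (hNt hb)).1⟩
  · rw [coe_union, Set.injOn_union disj]
    exact ⟨hM.injOn_snd, hN.injOn_snd, fun a ha b hb ↦
      disjoint_iff_ne.1 hst _ (mem_product.1 (hMs ha)).2 _ (mem_product.1 (hNt hb)).2⟩

end IsOrderMatching

section FromChains

variable {α : Type*} [PartialOrder α]

open Classical in
/-- The pairs formed by an element of `s` and the least element of `s` above it. If `s` is a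
chain, these are the edges joining the consecutive elements of `s`. -/
noncomputable def consecutivePairs (s : Finset α) : Finset (α × α) :=
  {e ∈ s ×ˢ s | e.1 < e.2 ∧ ∀ z ∈ s, e.1 < z → e.2 ≤ z}

theorem mem_consecutivePairs {s : Finset α} {e : α × α} :
    e ∈ consecutivePairs s ↔
      (e.1 ∈ s ∧ e.2 ∈ s) ∧ e.1 < e.2 ∧ ∀ z ∈ s, e.1 < z → e.2 ≤ z := by
  simp only [consecutivePairs, mem_filter, mem_product]

theorem isOrderMatching_consecutivePairs {s : Finset α} (hs : IsChain (· ≤ ·) (s : Set α)) :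
    IsOrderMatching (consecutivePairs s) where
  fst_le_snd _ he := (mem_consecutivePairs.1 he).2.1.le
  injOn_fst := by
    rintro ⟨x, y⟩ he ⟨_, y'⟩ he' rfl
    obtain ⟨⟨-, hy⟩, hxy, hmin⟩ := mem_consecutivePairs.1 he
    obtain ⟨⟨-, hy'⟩, hxy', hmin'⟩ := mem_consecutivePairs.1 he'
    exact Prod.ext rfl ((hmin y' hy' hxy').antisymm (hmin' y hy hxy))
  injOn_snd := by
    rintro ⟨x, y⟩ he ⟨x', _⟩ he' rfl
    obtain ⟨⟨hx, -⟩, hxy, hmin⟩ := mem_consecutivePairs.1 he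
    obtain ⟨⟨hx', -⟩, hxy', hmin'⟩ := mem_consecutivePairs.1 he'
    have not_lt : ¬x < x' := fun h ↦ (hmin x' hx' h).not_gt hxy'
    have not_gt : ¬x' < x := fun h ↦ (hmin' x hx h).not_gt hxy
    have eq : x = x' := (hs.total hx hx').elim (eq_of_le_of_not_lt · not_lt)
      fun h ↦ (eq_of_le_of_not_lt h not_gt).symm
    exact Prod.ext eq rfl

theorem card_le_card_consecutivePairs_add_one {s : Finset α}
    (hs : IsChain (· ≤ ·) (s : Set α)) : #s ≤ #(consecutivePairs s) + 1 := by
  classical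
  obtain rfl | hne := s.eq_empty_or_nonempty
  · simp
  obtain ⟨m, hm⟩ := s.exists_maximal hne
  have erase_subset : s.erase m ⊆ (consecutivePairs s).image Prod.fst := by
    intro x hx
    obtain ⟨hxm, hx⟩ := mem_erase.1 hx
    have lt_m : x < m := lt_of_le_of_ne ((hs.total hx hm.prop).elim id (hm.le_of_ge hx)) hxm
    obtain ⟨y, hy⟩ := exists_minimal (s := {z ∈ s | x < z}) ⟨m, mem_filter.2 ⟨hm.prop, lt_m⟩⟩
    obtain ⟨hys, hxy⟩ := mem_filter.1 hy.prop
    refine mem_image.2 ⟨(x, y), mem_consecutivePairs.2 ⟨⟨hx, hys⟩, hxy, fun z hz hxz ↦ ?_⟩, rfl⟩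
    exact (hs.total hys hz).elim id (hy.le_of_le (mem_filter.2 ⟨hz, hxz⟩))
  calc #s = #(s.erase m) + 1 := (card_erase_add_one hm.prop).symm
    _ ≤ #(consecutivePairs s) + 1 := by grw [erase_subset, card_image_le]

theorem exists_isOrderMatching_of_pairwiseDisjoint {ι : Type*} [DecidableEq α] {t : Finset ι}
    {f : ι → Finset α} (hf : ∀ i ∈ t, IsChain (· ≤ ·) (f i : Set α))
    (hdisj : (t : Set ι).PairwiseDisjoint f) :
    ∃ M ⊆ t.biUnion f ×ˢ t.biUnion f, IsOrderMatching M ∧ (∀ e ∈ M, e.1 ≠ e.2) ∧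
      #(t.biUnion f) ≤ #M + #t := by
  classical
  induction t using Finset.induction_on with
  | empty => exact ⟨∅, by simp, ⟨by simp, by simp, by simp⟩, by simp, by simp⟩
  | insert i t hi ih =>
    rw [coe_insert, Set.pairwiseDisjoint_insert_of_notMem (mem_coe.not.2 hi)] at hdisj
    obtain ⟨M, hMt, hM, hMne, hMcard⟩ := ih (fun j hj ↦ hf j (mem_insert_of_mem hj)) hdisj.1
    have chain_i := hf i (mem_insert_self i t)
    have subset_i : consecutivePairs (f i) ⊆ f i ×ˢ f i := filter_subset _ _
    have disj : Disjoint (f i) (t.biUnion f) := (disjoint_biUnion_right _ _ _).2 hdisj.2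
    have disj_pairs : Disjoint (consecutivePairs (f i)) M :=
      (disjoint_product.2 (.inl disj)).mono subset_i hMt
    rw [biUnion_insert]
    refine ⟨consecutivePairs (f i) ∪ M, ?_,
      (isOrderMatching_consecutivePairs chain_i).union hM subset_i hMt disj, ?_, ?_⟩
    · exact union_subset
        (subset_i.trans (product_subset_product subset_union_left subset_union_left))
        (hMt.trans (product_subset_product subset_union_right subset_union_right))
    · exact fun e he ↦ (mem_union.1 he).elim (fun h ↦ (mem_consecutivePairs.1 h).2.1.ne) (hMne e)
    · have := card_le_card_consecutivePairs_add_one chain_i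
      rw [card_union_of_disjoint disj, card_union_of_disjoint disj_pairs,
        card_insert_of_notMem hi]
      omega

end FromChains

theorem isOrderMatching_diag {α : Type*} [Preorder α] (s : Finset α) :
    IsOrderMatching s.diag where
  fst_le_snd _ he := (mem_diag.1 he).2.le
  injOn_fst _ he _ he' heq :=
    Prod.ext heq ((mem_diag.1 he).2.symm.trans (heq.trans (mem_diag.1 he').2))
  injOn_snd _ he _ he' heq :=
    Prod.ext ((mem_diag.1 he).2.trans (heq.trans (mem_diag.1 he').2.symm)) heq

section Reachable

variable {α : Type*} [Fintype α]

open Classical in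
/-- The elements reachable from `x` by following the pairs in `M` from left to right. If `M` is an
order matching, this is the part above `x` of the chain through `x` that is encoded by `M`. -/
noncomputable def reachableFrom (M : Finset (α × α)) (x : α) : Finset α :=
  {y | Relation.ReflTransGen (fun a b ↦ (a, b) ∈ M) x y}

theorem mem_reachableFrom {M : Finset (α × α)} {x y : α} :
    y ∈ reachableFrom M x ↔ Relation.ReflTransGen (fun a b ↦ (a, b) ∈ M) x y := by
  simp only [reachableFrom, mem_filter_univ]

theorem eq_of_mem_reachableFrom [DecidableEq α] {M : Finset (α × α)} {x y : α}
    (hy : y ∉ M.image Prod.snd) (hxy : y ∈ reachableFrom M x) : x = y := by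
  obtain h | ⟨z, -, hz⟩ := (mem_reachableFrom.1 hxy).cases_tail
  · exact h.symm
  · exact absurd (mem_image_of_mem Prod.snd hz) hy

namespace IsOrderMatching

variable {M : Finset (α × α)}

theorem isChain_reachableFrom [Preorder α] (hM : IsOrderMatching M) (x : α) :
    IsChain (· ≤ ·) (reachableFrom M x : Set α) := by
  have right_unique : Relator.RightUnique fun a b ↦ (a, b) ∈ M := fun a b c hab hac ↦
    congrArg Prod.snd (hM.injOn_fst hab hac rfl)
  have le_of_reachable {a b : α} (h : Relation.ReflTransGen (fun a b ↦ (a, b) ∈ M) a b) :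
      a ≤ b :=
    Relation.reflTransGen_le_of_le (fun a b ↦ hM.fst_le_snd (a, b)) a b h
  intro y hy z hz _
  exact (Relation.ReflTransGen.total_of_right_unique right_unique (mem_reachableFrom.1 hy)
    (mem_reachableFrom.1 hz)).imp le_of_reachable le_of_reachable

theorem disjoint_reachableFrom [LE α] [DecidableEq α] (hM : IsOrderMatching M) {x y : α}
    (hx : x ∉ M.image Prod.snd) (hy : y ∉ M.image Prod.snd) (hxy : x ≠ y) :
    Disjoint (reachableFrom M x) (reachableFrom M y) := by
  have left_unique : Relator.RightUnique (Function.swap fun a b ↦ (a, b) ∈ M) :=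
    fun c a b hac hbc ↦ congrArg Prod.fst (hM.injOn_snd hac hbc rfl)
  refine disjoint_left.2 fun z hxz hyz ↦ hxy ?_
  obtain h | h := Relation.ReflTransGen.total_of_right_unique left_unique
    (Relation.reflTransGen_swap.2 (mem_reachableFrom.1 hxz))
    (Relation.reflTransGen_swap.2 (mem_reachableFrom.1 hyz))
  · exact (eq_of_mem_reachableFrom hx (mem_reachableFrom.2 (Relation.reflTransGen_swap.1 h))).symm
  · exact eq_of_mem_reachableFrom hy (mem_reachableFrom.2 (Relation.reflTransGen_swap.1 h))

theorem exists_mem_reachableFrom [PartialOrder α] [DecidableEq α] (hM : IsOrderMatching M)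
    {x : α} (hx : (x, x) ∉ M) : ∃ r ∉ M.image Prod.snd, x ∈ reachableFrom M r := by
  induction x using WellFoundedLT.induction with | ind x ih
  by_cases root : x ∈ M.image Prod.snd
  · obtain ⟨y, hyx⟩ : ∃ y, (y, x) ∈ M := by simpa using root
    have hne : y ≠ x := by
      rintro rfl
      exact hx hyx
    have hyy : (y, y) ∉ M := fun hyy ↦ hne (congrArg Prod.snd (hM.injOn_fst hyy hyx rfl))
    obtain ⟨r, hr, hry⟩ := ih y (lt_of_le_of_ne (hM.fst_le_snd _ hyx) hne) hyy
    exact ⟨r, hr, mem_reachableFrom.2 ((mem_reachableFrom.1 hry).tail hyx)⟩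
  · exact ⟨x, root, mem_reachableFrom.2 .refl⟩

end IsOrderMatching

end Reachable

section ChainUnions

variable {α : Type*} [PartialOrder α] [Fintype α] [DecidableEq α]

theorem isGreatest_cMax (k : ℕ) :
    IsGreatest {n : ℕ | ∃ f : Fin k → Finset α, (∀ i, IsChain (· ≤ ·) (f i : Set α)) ∧
      Pairwise (Function.onFun Disjoint f) ∧ n = #(univ.biUnion f)} (cMax α k) := by
  refine ⟨Nat.sSup_mem ?nonempty ?bddAbove, fun _ hn ↦ le_csSup ?bddAbove hn⟩
  case nonempty =>
    refine ⟨_, fun _ ↦ ∅, fun _ ↦ ?_, fun _ _ _ ↦ disjoint_empty_left _, rfl⟩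
    rw [coe_empty]
    exact IsChain.empty
  case bddAbove =>
    refine ⟨Fintype.card α, ?_⟩
    rintro _ ⟨f, -, -, rfl⟩
    exact card_le_univ _

theorem card_biUnion_le_cMax {ι : Type*} {t : Finset ι} {f : ι → Finset α} {k : ℕ}
    (hf : ∀ i ∈ t, IsChain (· ≤ ·) (f i : Set α)) (hdisj : (t : Set ι).PairwiseDisjoint f)
    (ht : #t ≤ k) : #(t.biUnion f) ≤ cMax α k := by
  classical
  obtain ⟨φ⟩ : Nonempty (t ↪ Fin k) := Function.Embedding.nonempty_of_card_le (by simpa using ht)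
  let g : Fin k → Finset α := Function.extend φ (fun i : t ↦ f i) fun _ ↦ ∅
  have g_apply (i : t) : g (φ i) = f i := φ.injective.extend_apply _ _ i
  have g_eq_empty {j : Fin k} (hj : ¬∃ i, φ i = j) : g j = ∅ := Function.extend_apply' _ _ j hj
  have subset : t.biUnion f ⊆ univ.biUnion g := biUnion_subset.2 fun i hi ↦
    g_apply ⟨i, hi⟩ ▸ subset_biUnion_of_mem g (mem_univ _)
  refine (card_le_card subset).trans
    ((isGreatest_cMax k).2 ⟨g, fun j ↦ ?_, fun j j' hjj' ↦ ?_, rfl⟩)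
  · by_cases hj : ∃ i, φ i = j
    · obtain ⟨i, rfl⟩ := hj
      exact g_apply i ▸ hf i i.2
    · rw [g_eq_empty hj, coe_empty]
      exact IsChain.empty
  · by_cases hj : ∃ i, φ i = j
    · by_cases hj' : ∃ i, φ i = j'
      · obtain ⟨i, rfl⟩ := hj
        obtain ⟨i', rfl⟩ := hj'
        rw [Function.onFun, g_apply, g_apply]
        exact hdisj i.2 i'.2 fun h ↦ hjj' (congrArg φ (Subtype.ext h))
      · rw [Function.onFun, g_eq_empty hj']
        exact disjoint_empty_right _
    · rw [Function.onFun, g_eq_empty hj]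
      exact disjoint_empty_left _

theorem exists_isOrderMatching_card_loops_add_cMax_eq (k : ℕ) :
    ∃ M : Finset (α × α), IsOrderMatching M ∧ Fintype.card α ≤ #M + k ∧
      #{e ∈ M | e.1 = e.2} + cMax α k = Fintype.card α := by
  obtain ⟨f, hf, hdisj, card_eq⟩ := (isGreatest_cMax (α := α) k).1
  obtain ⟨M, hMU, hM, hM_ne, hM_card⟩ :=
    exists_isOrderMatching_of_pairwiseDisjoint (t := univ) (fun i _ ↦ hf i)
      (fun i _ j _ hij ↦ hdisj hij)
  set U := univ.biUnion f
  have diag_subset : Uᶜ.diag ⊆ Uᶜ ×ˢ Uᶜ := fun e he ↦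
    have ⟨fst_mem, fst_eq⟩ := mem_diag.1 he
    mem_product.2 ⟨fst_mem, fst_eq ▸ fst_mem⟩
  have disj : Disjoint M Uᶜ.diag :=
    disjoint_left.2 fun e he he' ↦ hM_ne e he (mem_diag.1 he').2
  have card_compl_add : #Uᶜ + #U = Fintype.card α := card_compl_add_card U
  refine ⟨M ∪ Uᶜ.diag, hM.union (isOrderMatching_diag Uᶜ) hMU diag_subset disjoint_compl_right,
    ?_, ?_⟩
  · rw [card_fin] at hM_card
    rw [card_union_of_disjoint disj, diag_card]
    omega
  · rw [filter_union, filter_false_of_mem hM_ne, empty_union,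
      filter_true_of_mem fun e he ↦ (mem_diag.1 he).2, diag_card, card_eq, card_compl_add]

theorem IsOrderMatching.card_le_card_loops_add_cMax {M : Finset (α × α)}
    (hM : IsOrderMatching M) {k : ℕ} (hk : Fintype.card α ≤ #M + k) :
    Fintype.card α ≤ #{e ∈ M | e.1 = e.2} + cMax α k := by
  let R : Finset α := (M.image Prod.snd)ᶜ
  let U : Finset α := R.biUnion (reachableFrom M)
  have card_R : #R ≤ k := by
    rw [card_compl, card_image_of_injOn hM.injOn_snd]
    omega
  have card_U : #U ≤ cMax α k :=
    card_biUnion_le_cMax (fun x _ ↦ hM.isChain_reachableFrom x)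
      (fun x hx y hy ↦ hM.disjoint_reachableFrom (mem_compl.1 hx) (mem_compl.1 hy)) card_R
  have diag_subset : Uᶜ.diag ⊆ {e ∈ M | e.1 = e.2} := by
    rintro ⟨x, _⟩ he
    obtain ⟨hx, rfl : x = _⟩ := mem_diag.1 he
    refine mem_filter.2 ⟨?_, rfl⟩
    by_contra hxM
    obtain ⟨r, hr, hrx⟩ := hM.exists_mem_reachableFrom hxM
    exact mem_compl.1 hx (mem_biUnion.2 ⟨r, mem_compl.2 hr, hrx⟩)
  calc Fintype.card α = #Uᶜ + #U := (card_compl_add_card U).symm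
    _ = #Uᶜ.diag + #U := by rw [diag_card]
    _ ≤ #{e ∈ M | e.1 = e.2} + cMax α k := by grw [diag_subset, card_U]

theorem cMax_add_two_add_cMax_le (k : ℕ) : cMax α (k + 2) + cMax α k ≤ 2 * cMax α (k + 1) := by
  obtain ⟨M, hM, card_M, loops_M⟩ := exists_isOrderMatching_card_loops_add_cMax_eq (α := α) (k + 2)
  obtain ⟨N, hN, card_N, loops_N⟩ := exists_isOrderMatching_card_loops_add_cMax_eq (α := α) k
  obtain h | h := le_or_gt (Fintype.card α) (#M + (k + 1))
  · have := hM.card_le_card_loops_add_cMax h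
    have := hN.card_le_card_loops_add_cMax (k := k + 1) (by omega)
    omega
  · obtain ⟨M', N', hM', hN', card_M', card_N', loops_eq⟩ := hM.exists_exchange hN (by omega)
    have := hM'.card_le_card_loops_add_cMax (k := k + 1) (by omega)
    have := hN'.card_le_card_loops_add_cMax (k := k + 1) (by omega)
    omega

end ChainUnions

theorem greene_lambda_weakly_decreasing
    (α : Type*) [PartialOrder α] [Fintype α] [DecidableEq α] :
    ∀ k : ℕ, 1 ≤ k → lam α (k + 1) ≤ lam α k := by
  rintro (_ | k) hk
  · omega
  have concave : cMax α (k + 1 + 1) + cMax α k ≤ 2 * cMax α (k + 1) := cMax_add_two_add_cMax_le k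
  rw [lam, lam, add_tsub_cancel_right, add_tsub_cancel_right]
  omega
end

section
/- Let p be a maximal element of a finite poset P. Then there exists K ≥ 1 such that c_i(P - {p}) = c_i(P) for i < K and c_i(P - {p}) = c_i(P) - 1 for i ≥ K. -/
open Finset

/-!
Deleting `p` lowers each `c_k` by at most one, so it is enough that a drop at `k` forces one at
`k + 1`, which follows from `c_{k+1}(P - p) + c_k(P) ≤ c_{k+1}(P) + c_k(P - p)`.

To prove this inequality, encode a union of chains labelled by `ι` as an injective map
`F : α → α ⊕ ι` sending an uncovered element to itself, a covered one to its successor in its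
chain, and the top of chain `i` to the label `i`. Let `F` encode an optimal union of `k + 1` chains
avoiding `p`, and `G` an optimal union of `k` chains, viewed as `k + 1` chains with the label `d`
unused. The interesting case is that `G` covers `p`; by maximality `G p` is then a label `e`.
Exchanging `F` and `G` on the component of `p` in the union of their graphs makes `G` avoid `p` and
preserves the total number of covered elements. This would bring `d` into use only if the
alternating path from `p` ends at `d`; interchanging the labels `d` and `e` in `F` beforehand
turns that path into a cycle which misses `d`.
-/

section AlternatingPaths

variable {α β : Type*} {F G : α → β} {p x : α} {d : β}

/-- One step of an alternating path in the union of the graphs of `F` and `G`, seen as bipartite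
graphs between `α` and `β`: follow an edge of `F`, then an edge of `G` backwards. -/
def AltStep (F G : α → β) (x y : α) : Prop := F x = G y

lemma altStep_rightUnique (hG : G.Injective) : Relator.RightUnique (AltStep F G) :=
  fun _ _ _ hb hc => hG (hb.symm.trans hc)

lemma transGen_of_mem_cycle {r : α → α → Prop} (hr : Relator.RightUnique r)
    (hp : Relation.TransGen r p p) (hx : Relation.ReflTransGen r p x) :
    Relation.TransGen r x p := by
  induction hx with
  | refl => exact hp
  | tail _ hxy ih =>
    obtain ⟨z, hxz, hzp⟩ := Relation.TransGen.head'_iff.1 ih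
    exact hr hxz hxy ▸ Relation.TransGen.trans_right hzp hp

lemma exists_component_avoiding (hF : F.Injective) (hG : G.Injective) (hd : ∀ y, G y ≠ d)
    (hpath : ∀ y, Relation.ReflTransGen (AltStep F G) p y → F y ≠ d) :
    ∃ A : Set α, p ∈ A ∧ (∀ y ∈ A, F y ≠ d) ∧ ∀ y z, F y = G z → (y ∈ A ↔ z ∈ A) := by
  let r := AltStep F G
  refine ⟨{y | Relation.ReflTransGen r p y ∨ Relation.ReflTransGen r y p}, .inl .refl, ?_, ?_⟩
  · rintro y (hpy | hyp) hyd
    · exact hpath y hpy hyd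
    · rcases hyp.cases_head with rfl | ⟨z, hyz, -⟩
      · exact hpath y .refl hyd
      · exact hd z (hyz.symm.trans hyd)
  · intro y z (hyz : r y z)
    constructor
    · rintro (hpy | hyp)
      · exact .inl (hpy.tail hyz)
      · rcases hyp.cases_head with rfl | ⟨z', hyz', hzp⟩
        · exact .inl (.single hyz)
        · exact .inr (altStep_rightUnique hG hyz' hyz ▸ hzp)
    · rintro (hpz | hzp)
      · rcases hpz.cases_tail with rfl | ⟨y', hpy, hyz'⟩
        · exact .inr (.single hyz)
        · exact .inl (hF (hyz'.trans hyz.symm) ▸ hpy)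
      · exact .inr (hzp.head hyz)

lemma altPath_of_altPath_swap [DecidableEq β] (hG : G.Injective) (hd : ∀ y, G y ≠ d)
    (hx : Relation.ReflTransGen (AltStep (Equiv.swap (G p) d ∘ F) G) p x) :
    Relation.ReflTransGen (AltStep F G) p x := by
  induction hx with
  | refl => exact .refl
  | @tail y z _ hyz ih =>
    simp only [AltStep, Function.comp_apply, Equiv.swap_apply_def] at hyz
    split_ifs at hyz with hFy hFy
    · exact absurd hyz.symm (hd z)
    · exact hG hyz ▸ .refl
    · exact ih.tail hyz

lemma altPath_swap_avoids [DecidableEq β] (hG : G.Injective) (hd : ∀ y, G y ≠ d)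
    (hx : Relation.ReflTransGen (AltStep F G) p x) (hxd : F x = d) (y : α)
    (hy : Relation.ReflTransGen (AltStep (Equiv.swap (G p) d ∘ F) G) p y) :
    (Equiv.swap (G p) d ∘ F) y ≠ d := by
  intro hyd
  have hyp : AltStep F G y p := by
    simpa only [AltStep, Function.comp_apply, Equiv.swap_apply_eq_iff, Equiv.swap_apply_right]
      using hyd
  -- A path through both `y` and `x` would return to `p` at `y`, and yet stop at `x`.
  have hcycle : Relation.TransGen (AltStep F G) p p :=
    .tail' (altPath_of_altPath_swap hG hd hy) hyp
  obtain ⟨z, hxz, -⟩ := Relation.TransGen.head'_iff.1 <|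
    transGen_of_mem_cycle (altStep_rightUnique hG) hcycle hx
  exact hd z (hxz.symm.trans hxd)

end AlternatingPaths

section LabelledMaps

variable {α ι κ : Type*} {F G : α → α ⊕ ι}

lemma map_comp_apply_eq_inl_iff {σ : ι → κ} {v w : α} :
    (Sum.map id σ ∘ F) v = Sum.inl w ↔ F v = Sum.inl w := by
  cases h : F v <;> simp [h]

lemma exists_eq_map_castSucc_comp {γ : Type*} {k : ℕ} {F : γ → α ⊕ Fin (k + 1)}
    (hF : ∀ v, F v ≠ Sum.inr (Fin.last k)) :
    ∃ G : γ → α ⊕ Fin k, F = Sum.map id Fin.castSucc ∘ G := by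
  refine Set.range_subset_range_iff_exists_comp.1 ?_
  rintro _ ⟨v, rfl⟩
  cases hv : F v with
  | inl w => exact ⟨Sum.inl w, rfl⟩
  | inr i =>
    obtain ⟨j, rfl⟩ := Fin.exists_castSucc_eq.2 fun h : i = Fin.last k => hF v (h ▸ hv)
    exact ⟨Sum.inr j, rfl⟩

variable [Fintype α]

open Classical in
/-- The set of elements not fixed by `F`: the union of the chains that `F` encodes. -/
noncomputable def moved (F : α → α ⊕ ι) : Finset α := {v | F v ≠ Sum.inl v}

lemma mem_moved {v : α} : v ∈ moved F ↔ F v ≠ Sum.inl v := by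
  simp only [moved, mem_filter, mem_univ, true_and]

lemma moved_map_comp (σ : ι → κ) : moved (Sum.map id σ ∘ F) = moved F := by
  ext v
  rw [mem_moved, mem_moved, ne_eq, map_comp_apply_eq_inl_iff]

open Classical in
lemma card_moved_piecewise_add (A : Set α) :
    #(moved (A.piecewise F G)) + #(moved (A.piecewise G F)) = #(moved F) + #(moved G) := by
  simp only [moved, card_filter, ← sum_add_distrib]
  refine sum_congr rfl fun v _ => ?_
  by_cases hv : v ∈ A <;> simp [hv, add_comm]

end LabelledMaps

section SuccessorMaps

variable {α ι κ : Type*} [PartialOrder α] {F G : α → α ⊕ ι}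

/-- `F` encodes a family of disjoint chains labelled by `ι`: the elements outside the chains are
fixed, and any other element goes to its successor in its chain or, at the top of chain `i`, to the
label `i`. -/
structure IsSuccessorMap (F : α → α ⊕ ι) : Prop where
  injective : F.Injective
  le : ∀ ⦃v w⦄, F v = Sum.inl w → v ≤ w

lemma isSuccessorMap_map_comp {σ : ι → κ} (hσ : σ.Injective) :
    IsSuccessorMap (Sum.map id σ ∘ F) ↔ IsSuccessorMap F := by
  have hmap : (Sum.map id σ : α ⊕ ι → α ⊕ κ).Injective := Function.injective_id.sumMap hσ
  exact ⟨fun h => ⟨h.injective.of_comp, fun v w hvw => h.le (map_comp_apply_eq_inl_iff.2 hvw)⟩,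
    fun h => ⟨hmap.comp h.injective, fun v w hvw => h.le (map_comp_apply_eq_inl_iff.1 hvw)⟩⟩

open Classical in
lemma IsSuccessorMap.piecewise (hF : IsSuccessorMap F) (hG : IsSuccessorMap G) {A : Set α}
    (hFG : ∀ x ∈ A, ∀ y ∉ A, F x ≠ G y) : IsSuccessorMap (A.piecewise F G) where
  injective := A.injective_piecewise_iff.2 ⟨hF.injective.injOn, hG.injective.injOn, hFG⟩
  le v w hvw := by
    by_cases hv : v ∈ A
    · exact hF.le (by rwa [A.piecewise_eq_of_mem _ _ hv] at hvw)
    · exact hG.le (by rwa [A.piecewise_eq_of_notMem _ _ hv] at hvw)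

variable [Fintype α]

lemma IsSuccessorMap.exchange (hF : IsSuccessorMap F) (hG : IsSuccessorMap G) {p : α} {d e : ι}
    (hFp : F p = Sum.inl p) (hGp : G p = Sum.inr e) (hGd : ∀ v, G v ≠ Sum.inr d) :
    ∃ F' G' : α → α ⊕ ι, IsSuccessorMap F' ∧ IsSuccessorMap G' ∧ G' p = Sum.inl p ∧
      (∀ v, G' v ≠ Sum.inr d) ∧ #(moved F') + #(moved G') = #(moved F) + #(moved G) := by
  classical
  wlog hpath : ∀ y, Relation.ReflTransGen (AltStep F G) p y → F y ≠ Sum.inr d generalizing F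
  · push Not at hpath
    obtain ⟨x, hpx, hxd⟩ := hpath
    have hswap : Sum.map id (Equiv.swap e d) ∘ F = Equiv.swap (G p) (Sum.inr d) ∘ F := by
      rw [hGp, ← Equiv.Perm.sumCongr_one_swap]
      rfl
    have hF₁ := (isSuccessorMap_map_comp (Equiv.swap e d).injective).2 hF
    have := this hF₁ (by simp [hFp])
      (by simpa only [hswap] using altPath_swap_avoids hG.injective hGd hpx hxd)
    simpa only [moved_map_comp] using this
  obtain ⟨A, hpA, hAd, hA⟩ := exists_component_avoiding hF.injective hG.injective hGd hpath
  refine ⟨A.piecewise G F, A.piecewise F G, hG.piecewise hF ?_, hF.piecewise hG ?_, ?_, ?_, ?_⟩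
  · exact fun x hx y hy hxy => hy ((hA y x hxy.symm).2 hx)
  · exact fun x hx y hy hxy => hy ((hA x y hxy).1 hx)
  · rw [A.piecewise_eq_of_mem _ _ hpA, hFp]
  · intro v
    by_cases hv : v ∈ A
    · rw [A.piecewise_eq_of_mem _ _ hv]
      exact hAd v hv
    · rw [A.piecewise_eq_of_notMem _ _ hv]
      exact hGd v
  · rw [card_moved_piecewise_add, add_comm]

end SuccessorMaps

section ChainPackings

variable {α β ι : Type*} [PartialOrder α] [PartialOrder β] {f : ι → Finset α}

/-- A family of pairwise disjoint chains, as in the definition of `cMax`. -/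
structure IsChainPacking (f : ι → Finset α) : Prop where
  isChain : ∀ i, IsChain (· ≤ ·) (f i : Set α)
  disjoint : Pairwise (Function.onFun Disjoint f)

namespace IsChainPacking

lemma eq_of_mem (hf : IsChainPacking f) {i j : ι} {v : α} (hi : v ∈ f i) (hj : v ∈ f j) :
    i = j :=
  hf.disjoint.eq (not_disjoint_iff.2 ⟨v, hi, hj⟩)

lemma mono (hf : IsChainPacking f) {g : ι → Finset α} (hgf : ∀ i, g i ⊆ f i) :
    IsChainPacking g where
  isChain i := (hf.isChain i).mono (hgf i)
  disjoint i j hij := disjoint_of_subset_left (hgf i) <|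
    disjoint_of_subset_right (hgf j) (hf.disjoint hij)

lemma map (hf : IsChainPacking f) (e : α ↪o β) :
    IsChainPacking fun i => (f i).map e.toEmbedding where
  isChain i := by
    rw [coe_map]
    exact (hf.isChain i).image e
  disjoint i j hij := (disjoint_map _).2 (hf.disjoint hij)

lemma subtype (hf : IsChainPacking f) (q : α → Prop) [DecidablePred q] :
    IsChainPacking fun i => (f i).subtype q where
  isChain i _ hv _ hw hvw :=
    hf.isChain i (mem_subtype.1 hv) (mem_subtype.1 hw) (Subtype.coe_injective.ne hvw)
  disjoint _ _ hij := disjoint_left.2 fun _ hvi hvj =>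
    hij (hf.eq_of_mem (mem_subtype.1 hvi) (mem_subtype.1 hvj))

end IsChainPacking

/-- The relation `F v = y` for a map `F` encoding the chains `f`; see `IsSuccessorMap`. -/
inductive IsNext (f : ι → Finset α) : α → α ⊕ ι → Prop
  | uncovered {v : α} : (∀ i, v ∉ f i) → IsNext f v (Sum.inl v)
  | succ {v w : α} {i : ι} : v ∈ f i → Minimal (fun u => u ∈ f i ∧ v < u) w →
      IsNext f v (Sum.inl w)
  | top {v : α} {i : ι} : Maximal (· ∈ f i) v → IsNext f v (Sum.inr i)

lemma exists_isNext [WellFoundedLT α] (f : ι → Finset α) (v : α) : ∃ y, IsNext f v y := by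
  by_cases hv : ∃ i, v ∈ f i
  · obtain ⟨i, hi⟩ := hv
    by_cases hw : ∃ w, w ∈ f i ∧ v < w
    · obtain ⟨w, hw⟩ := exists_minimal_of_wellFoundedLT _ hw
      exact ⟨_, .succ hi hw⟩
    · exact ⟨_, .top (maximal_iff_forall_gt.2 ⟨hi, fun w hvw hwi => hw ⟨w, hwi, hvw⟩⟩)⟩
  · exact ⟨_, .uncovered (not_exists.1 hv)⟩

namespace IsNext

lemma le {v w : α} (h : IsNext f v (Sum.inl w)) : v ≤ w := by
  cases h with
  | uncovered => exact le_rfl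
  | succ _ hw => exact hw.prop.2.le

lemma eq_inl_iff {v : α} {y : α ⊕ ι} (h : IsNext f v y) : y = Sum.inl v ↔ ∀ i, v ∉ f i := by
  cases h with
  | uncovered hv => exact iff_of_true rfl hv
  | succ hi hw =>
    exact iff_of_false (fun h => hw.prop.2.ne' (Sum.inl.inj h)) fun h => h _ hi
  | top hv => exact iff_of_false Sum.inr_ne_inl fun h => h _ hv.prop

lemma leftUnique (hf : IsChainPacking f) : Relator.LeftUnique (IsNext f) := by
  have not_lt_of_next {v v' w : α} {i : ι} (hv' : v' ∈ f i)
      (hw : Minimal (fun u => u ∈ f i ∧ v < u) w) (hv'w : v' < w) : ¬ v < v' :=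
    fun hvv' => hw.not_prop_of_lt hv'w ⟨hv', hvv'⟩
  intro v y v' hv hv'
  cases hv with
  | uncovered hv =>
    cases hv' with
    | uncovered => rfl
    | succ _ hw => exact absurd hw.prop.1 (hv _)
  | succ hvi hw =>
    cases hv' with
    | uncovered hw' => exact absurd hw.prop.1 (hw' _)
    | succ hvj hw' =>
      obtain rfl := hf.eq_of_mem hw.prop.1 hw'.prop.1
      rcases (hf.isChain _).total hvi hvj with h | h
      · exact h.eq_of_not_lt (not_lt_of_next hvj hw hw'.prop.2)
      · exact (h.eq_of_not_lt (not_lt_of_next hvi hw' hw.prop.2)).symm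
  | top hv =>
    cases hv' with
    | top hv' =>
      rcases (hf.isChain _).total hv.prop hv'.prop with h | h
      · exact hv.eq_of_le hv'.prop h
      · exact (hv'.eq_of_le hv.prop h).symm

end IsNext

lemma IsChainPacking.exists_successorMap [Fintype α] [DecidableEq α] [Fintype ι]
    (hf : IsChainPacking f) :
    ∃ F : α → α ⊕ ι, IsSuccessorMap F ∧ moved F = univ.biUnion f := by
  choose F hF using exists_isNext f
  refine ⟨F, ⟨fun v w hvw => IsNext.leftUnique hf (hF v) (hvw ▸ hF w),
    fun v w hvw => (hvw ▸ hF v).le⟩, ?_⟩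
  ext v
  simp [mem_moved, (hF v).eq_inl_iff]

end ChainPackings

section Orbits

variable {α ι : Type*} {F : α → α ⊕ ι}

/-- The step relation of the partial map `F` on `α ⊕ ι`, which is undefined on the labels `ι`. -/
def OrbitStep (F : α → α ⊕ ι) (x y : α ⊕ ι) : Prop := ∃ v, x = Sum.inl v ∧ F v = y

lemma orbitStep_inl {v : α} {y : α ⊕ ι} : OrbitStep F (Sum.inl v) y ↔ F v = y := by
  simp [OrbitStep]

lemma not_orbitStep_inr {i : ι} {y : α ⊕ ι} : ¬ OrbitStep F (Sum.inr i) y := by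
  simp [OrbitStep]

lemma orbitStep_rightUnique : Relator.RightUnique (OrbitStep F) := by
  rintro _ _ _ ⟨v, rfl, rfl⟩ hv
  exact orbitStep_inl.1 hv

lemma label_unique {x : α ⊕ ι} {i j : ι}
    (hi : Relation.ReflTransGen (OrbitStep F) x (Sum.inr i))
    (hj : Relation.ReflTransGen (OrbitStep F) x (Sum.inr j)) : i = j := by
  have reaches_iff {i j : ι} :
      Relation.ReflTransGen (OrbitStep F) (Sum.inr i) (Sum.inr j) ↔ i = j := by
    rw [Relation.reflTransGen_iff_eq fun _ => not_orbitStep_inr, Sum.inr.injEq, eq_comm]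
  rcases hi.total_of_right_unique orbitStep_rightUnique hj with h | h
  · exact reaches_iff.1 h
  · exact (reaches_iff.1 h).symm

variable [PartialOrder α]

namespace IsSuccessorMap

lemma le_of_orbit (hF : IsSuccessorMap F) {v w : α}
    (h : Relation.ReflTransGen (OrbitStep F) (Sum.inl v) (Sum.inl w)) : v ≤ w := by
  generalize hy : Sum.inl w = y at h
  induction h generalizing w with
  | refl => exact (Sum.inl.inj hy).ge
  | tail _ hxy ih =>
    obtain ⟨u, rfl, huw⟩ := hxy
    exact (ih rfl).trans (hF.le (huw.trans hy.symm))

lemma le_total_of_label_eq (hF : IsSuccessorMap F) {v w : α} {i : ι}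
    (hv : Relation.ReflTransGen (OrbitStep F) (Sum.inl v) (Sum.inr i))
    (hw : Relation.ReflTransGen (OrbitStep F) (Sum.inl w) (Sum.inr i)) : v ≤ w ∨ w ≤ v := by
  have hunique : Relator.RightUnique (Function.swap (OrbitStep F)) := by
    rintro y _ _ ⟨u, rfl, hu⟩ ⟨u', rfl, hu'⟩
    rw [hF.injective (hu.trans hu'.symm)]
  rw [← Relation.reflTransGen_swap] at hv hw
  rcases hw.total_of_right_unique hunique hv with h | h
  · exact .inl (hF.le_of_orbit (Relation.reflTransGen_swap.1 h))
  · exact .inr (hF.le_of_orbit (Relation.reflTransGen_swap.1 h))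

lemma exists_label_iff [WellFoundedGT α] (hF : IsSuccessorMap F) {v : α} :
    (∃ i, Relation.ReflTransGen (OrbitStep F) (Sum.inl v) (Sum.inr i)) ↔ F v ≠ Sum.inl v := by
  constructor
  · rintro ⟨i, hi⟩ hv
    have hself : Relation.TransGen (OrbitStep F) (Sum.inl v) (Sum.inl v) :=
      .single (orbitStep_inl.2 hv)
    obtain ⟨_, hstep, -⟩ := Relation.TransGen.head'_iff.1 <|
      transGen_of_mem_cycle orbitStep_rightUnique hself hi
    exact not_orbitStep_inr hstep
  · induction v using WellFoundedGT.induction with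
    | ind v ih =>
      intro hv
      cases hFv : F v with
      | inr i => exact ⟨i, .single (orbitStep_inl.2 hFv)⟩
      | inl w =>
        have hvw : v ≠ w := fun h => hv (h ▸ hFv)
        have hw : F w ≠ Sum.inl w := fun h => hvw (hF.injective (hFv.trans h.symm))
        obtain ⟨i, hi⟩ := ih w ((hF.le hFv).lt_of_ne hvw) hw
        exact ⟨i, hi.head (orbitStep_inl.2 hFv)⟩

lemma exists_chainPacking [Fintype α] [DecidableEq α] [Fintype ι] (hF : IsSuccessorMap F) :
    ∃ f : ι → Finset α, IsChainPacking f ∧ univ.biUnion f = moved F := by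
  classical
  refine ⟨fun i => {v | Relation.ReflTransGen (OrbitStep F) (Sum.inl v) (Sum.inr i)},
    ⟨fun i v hv w hw _ => ?_, fun i j hij => disjoint_left.2 fun v hvi hvj => hij ?_⟩, ?_⟩
  · exact hF.le_total_of_label_eq (mem_filter.1 hv).2 (mem_filter.1 hw).2
  · exact label_unique (mem_filter.1 hvi).2 (mem_filter.1 hvj).2
  · ext v
    simp [mem_moved, ← hF.exists_label_iff]

end IsSuccessorMap

end Orbits

section ChainNumbers

variable {α : Type*} [PartialOrder α] [Fintype α] [DecidableEq α] {k : ℕ} {p : α}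

lemma bddAbove_card_chainPacking (α : Type*) [PartialOrder α] [Finite α] [DecidableEq α]
    (k : ℕ) : BddAbove {n : ℕ | ∃ f : Fin k → Finset α,
      (∀ i, IsChain (· ≤ ·) (↑(f i) : Set α)) ∧ Pairwise (Function.onFun Disjoint f) ∧
      n = #(univ.biUnion f)} := by
  cases nonempty_fintype α
  exact ⟨Fintype.card α, by rintro _ ⟨f, -, -, rfl⟩; exact card_le_univ _⟩

lemma IsChainPacking.card_le_cMax {f : Fin k → Finset α} (hf : IsChainPacking f) :
    #(univ.biUnion f) ≤ cMax α k :=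
  le_csSup (bddAbove_card_chainPacking α k) ⟨f, hf.isChain, hf.disjoint, rfl⟩

lemma exists_chainPacking_card_eq_cMax (α : Type*) [PartialOrder α] [Fintype α] [DecidableEq α]
    (k : ℕ) : ∃ f : Fin k → Finset α, IsChainPacking f ∧ #(univ.biUnion f) = cMax α k := by
  obtain ⟨f, hchain, hdisj, hcard⟩ := Nat.sSup_mem
    (by exact ⟨_, fun _ => ∅, by simp, fun _ _ _ => disjoint_empty_left _, rfl⟩)
    (bddAbove_card_chainPacking α k)
  exact ⟨f, ⟨hchain, hdisj⟩, hcard.symm⟩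

lemma cMax_zero (α : Type*) [PartialOrder α] [Fintype α] [DecidableEq α] : cMax α 0 = 0 := by
  obtain ⟨f, -, hf⟩ := exists_chainPacking_card_eq_cMax α 0
  simpa using hf.symm

lemma cMax_le_card (α : Type*) [PartialOrder α] [Fintype α] [DecidableEq α] (k : ℕ) :
    cMax α k ≤ Fintype.card α := by
  obtain ⟨f, -, hf⟩ := exists_chainPacking_card_eq_cMax α k
  exact hf ▸ card_le_univ _

lemma cMax_card (α : Type*) [PartialOrder α] [Fintype α] [DecidableEq α] :
    cMax α (Fintype.card α) = Fintype.card α := by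
  let e := (Fintype.equivFin α).symm
  have hsingletons : IsChainPacking fun i => ({e i} : Finset α) :=
    ⟨fun i => by simp, fun i j hij => disjoint_singleton.2 (e.injective.ne hij)⟩
  have hcover : univ.biUnion (fun i => ({e i} : Finset α)) = univ := by
    ext v
    simpa using ⟨e.symm v, (e.apply_symm_apply v).symm⟩
  exact (cMax_le_card α _).antisymm (by simpa [hcover] using hsingletons.card_le_cMax)

lemma IsChainPacking.card_le_cMax_ne {f : Fin k → Finset α} (hf : IsChainPacking f)
    (hp : p ∉ univ.biUnion f) : #(univ.biUnion f) ≤ cMax {x : α // x ≠ p} k := by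
  have himage : univ.biUnion f =
      (univ.biUnion fun i => (f i).subtype (· ≠ p)).map (Function.Embedding.subtype _) := by
    ext v
    simp only [mem_biUnion, mem_univ, true_and, not_exists] at hp
    simp only [mem_biUnion, mem_univ, true_and, mem_map, mem_subtype,
      Function.Embedding.coe_subtype]
    refine ⟨fun ⟨i, hi⟩ => ⟨⟨v, ?_⟩, ⟨i, hi⟩, rfl⟩, ?_⟩
    · rintro rfl
      exact hp i hi
    · rintro ⟨v, hv, rfl⟩
      exact hv
  rw [himage, card_map]
  exact (hf.subtype _).card_le_cMax

lemma exists_chainPacking_card_eq_cMax_ne (p : α) (k : ℕ) :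
    ∃ f : Fin k → Finset α, IsChainPacking f ∧ p ∉ univ.biUnion f ∧
      #(univ.biUnion f) = cMax {x : α // x ≠ p} k := by
  obtain ⟨f, hf, hcard⟩ := exists_chainPacking_card_eq_cMax {x : α // x ≠ p} k
  refine ⟨_, hf.map (OrderEmbedding.subtype _), by simp, ?_⟩
  rw [← hcard, ← card_map (OrderEmbedding.subtype (· ≠ p)).toEmbedding]
  congr 1
  ext v
  simp only [mem_biUnion, mem_univ, true_and, mem_map]
  tauto

lemma cMax_ne_le_cMax (p : α) (k : ℕ) : cMax {x : α // x ≠ p} k ≤ cMax α k := by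
  obtain ⟨f, hf, -, hcard⟩ := exists_chainPacking_card_eq_cMax_ne p k
  exact hcard ▸ hf.card_le_cMax

lemma cMax_le_cMax_ne_add_one (p : α) (k : ℕ) :
    cMax α k ≤ cMax {x : α // x ≠ p} k + 1 := by
  obtain ⟨f, hf, hcard⟩ := exists_chainPacking_card_eq_cMax α k
  have herase := (hf.mono fun i => erase_subset p (f i)).card_le_cMax_ne (p := p) (by simp)
  rw [← erase_biUnion] at herase
  have := pred_card_le_card_erase (s := univ.biUnion f) (a := p)
  lia

lemma exists_cMax_ne_lt_cMax (p : α) : ∃ k, cMax {x : α // x ≠ p} k < cMax α k := by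
  refine ⟨Fintype.card α, ?_⟩
  rw [cMax_card]
  exact (cMax_le_card _ _).trans_lt (Fintype.card_subtype_lt (not_not_intro (rfl : p = p)))

namespace IsSuccessorMap

variable {F : α → α ⊕ Fin k}

lemma card_moved_le_cMax (hF : IsSuccessorMap F) : #(moved F) ≤ cMax α k := by
  obtain ⟨f, hf, hmoved⟩ := hF.exists_chainPacking
  exact hmoved ▸ hf.card_le_cMax

lemma card_moved_le_cMax_ne (hF : IsSuccessorMap F) (hp : F p = Sum.inl p) :
    #(moved F) ≤ cMax {x : α // x ≠ p} k := by
  obtain ⟨f, hf, hmoved⟩ := hF.exists_chainPacking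
  rw [← hmoved]
  exact hf.card_le_cMax_ne (by simpa only [hmoved, mem_moved, not_not] using hp)

end IsSuccessorMap

lemma exists_successorMap_card_eq_cMax (α : Type*) [PartialOrder α] [Fintype α] [DecidableEq α]
    (k : ℕ) : ∃ F : α → α ⊕ Fin k, IsSuccessorMap F ∧ #(moved F) = cMax α k := by
  obtain ⟨f, hf, hcard⟩ := exists_chainPacking_card_eq_cMax α k
  obtain ⟨F, hF, hmoved⟩ := hf.exists_successorMap
  exact ⟨F, hF, hmoved ▸ hcard⟩

lemma exists_successorMap_card_eq_cMax_ne (p : α) (k : ℕ) :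
    ∃ F : α → α ⊕ Fin k, IsSuccessorMap F ∧ F p = Sum.inl p ∧
      #(moved F) = cMax {x : α // x ≠ p} k := by
  obtain ⟨f, hf, hp, hcard⟩ := exists_chainPacking_card_eq_cMax_ne p k
  obtain ⟨F, hF, hmoved⟩ := hf.exists_successorMap
  exact ⟨F, hF, by simpa only [← hmoved, mem_moved, not_not] using hp, hmoved ▸ hcard⟩

lemma cMax_ne_succ_add_cMax_le (hp : IsMax p) (k : ℕ) :
    cMax {x : α // x ≠ p} (k + 1) + cMax α k ≤ cMax α (k + 1) + cMax {x : α // x ≠ p} k := by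
  obtain ⟨F, hF, hFp, hFcard⟩ := exists_successorMap_card_eq_cMax_ne p (k + 1)
  obtain ⟨G, hG, hGcard⟩ := exists_successorMap_card_eq_cMax α k
  rw [← hFcard, ← hGcard]
  cases hGp : G p with
  | inl w =>
    obtain rfl : p = w := hp.eq_of_le (hG.le hGp)
    exact Nat.add_le_add hF.card_moved_le_cMax (hG.card_moved_le_cMax_ne hGp)
  | inr e =>
    have hcast := Fin.castSucc_injective k
    obtain ⟨F', G', hF', hG', hG'p, hG'last, hcard⟩ :=
      hF.exchange ((isSuccessorMap_map_comp hcast).2 hG) (d := Fin.last k)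
        (e := e.castSucc) hFp (by simp [hGp]) fun v => by cases h : G v <;> simp [h]
    obtain ⟨G'', rfl⟩ := exists_eq_map_castSucc_comp hG'last
    have hG'' := (isSuccessorMap_map_comp hcast).1 hG'
    rw [moved_map_comp, moved_map_comp] at hcard
    exact hcard ▸ Nat.add_le_add hF'.card_moved_le_cMax
      (hG''.card_moved_le_cMax_ne (map_comp_apply_eq_inl_iff.1 hG'p))

lemma monotone_cMax_ne_lt_cMax (hp : IsMax p) :
    Monotone fun k => cMax {x : α // x ≠ p} k < cMax α k := by
  refine monotone_nat_of_le_succ fun k (hk : _ < _) => show _ < _ from ?_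
  have hstep := cMax_ne_succ_add_cMax_le hp k
  lia

end ChainNumbers

theorem removal_decreases_c_exactly_once
    (α : Type*) [PartialOrder α] [Fintype α] [DecidableEq α]
    (p : α) (hp : ∀ x : α, p ≤ x → x = p) :
    ∃ K : ℕ, 1 ≤ K ∧
      (∀ i : ℕ, i < K → cMax {x : α // x ≠ p} i = cMax α i) ∧
      (∀ i : ℕ, K ≤ i → cMax {x : α // x ≠ p} i = cMax α i - 1) := by
  classical
  have hdrop := exists_cMax_ne_lt_cMax p
  have hmax : IsMax p := fun x hx => (hp x hx).le
  refine ⟨Nat.find hdrop, ?_, fun i hi => ?_, fun i hi => ?_⟩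
  · rw [Nat.one_le_iff_ne_zero, ne_eq, Nat.find_eq_zero, cMax_zero, cMax_zero]
    exact lt_irrefl 0
  · exact (cMax_ne_le_cMax p i).eq_of_not_lt (Nat.find_min hdrop hi)
  · have hlt := monotone_cMax_ne_lt_cMax hmax hi (Nat.find_spec hdrop)
    have hle := cMax_le_cMax_ne_add_one p i
    lia
end

section
/- If a chain family C = {C_1,...,C_l} and an antichain family A = {A_1,...,A_k} in a finite poset P are orthogonal, then C is a maximal chain l-family (it covers c_l(P) elements) and A is a maximal antichain k-family (it covers a_k(P) elements). -/
/-!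
Let the `l` chains `C` and the `k` antichains `A` be orthogonal in a poset of `n` elements. The
`l * k` intersections `C i ∩ A j` are nonempty and pairwise disjoint, so inclusion-exclusion gives
`|⋃ C| + |⋃ A| ≥ n + l * k`. A chain and an antichain share at most one element, so
inclusion-exclusion gives the reverse inequality `|⋃ C'| + |⋃ A'| ≤ n + l * k` for all families of
`l` chains and `k` antichains. Taking `A' = A` shows that `C` is maximal, and taking `C' = C` shows
that `A` is.
-/

open Finset

section Families

variable {α ι κ : Type*}

theorem pairwiseDisjoint_prod_inf [SemilatticeInf α] [OrderBot α] {s : Set ι} {t : Set κ}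
    {f : ι → α} {g : κ → α} (hf : s.PairwiseDisjoint f) (hg : t.PairwiseDisjoint g) :
    (s ×ˢ t : Set (ι × κ)).PairwiseDisjoint fun p ↦ f p.1 ⊓ g p.2 := by
  rintro ⟨i, j⟩ ⟨hi, hj⟩ ⟨i', j'⟩ ⟨hi', hj'⟩ hne
  rcases Prod.mk_inj.not.trans not_and_or |>.1 hne with hii' | hjj'
  · exact (hf hi hi' hii').mono inf_le_left inf_le_left
  · exact (hg hj hj' hjj').mono inf_le_right inf_le_right

variable [DecidableEq α]

theorem biUnion_inter_biUnion (s : Finset ι) (t : Finset κ) (S : ι → Finset α)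
    (T : κ → Finset α) :
    s.biUnion S ∩ t.biUnion T = (s ×ˢ t).biUnion fun p ↦ S p.1 ∩ T p.2 := by
  simpa only [sup_eq_biUnion, inf_eq_inter] using sup_inf_sup s t S T

theorem card_biUnion_inter_biUnion_le_mul {s : Finset ι} {t : Finset κ} {S : ι → Finset α}
    {T : κ → Finset α} {n : ℕ} (h : ∀ i ∈ s, ∀ j ∈ t, #(S i ∩ T j) ≤ n) :
    #(s.biUnion S ∩ t.biUnion T) ≤ #s * #t * n := by
  rw [biUnion_inter_biUnion, ← card_product]
  refine card_biUnion_le_card_mul _ _ _ fun p hp ↦ ?_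
  obtain ⟨hi, hj⟩ := mem_product.1 hp
  exact h p.1 hi p.2 hj

theorem card_mul_card_le_card_biUnion_inter_biUnion {s : Finset ι} {t : Finset κ}
    {S : ι → Finset α} {T : κ → Finset α} (hS : (s : Set ι).PairwiseDisjoint S)
    (hT : (t : Set κ).PairwiseDisjoint T) (h : ∀ i ∈ s, ∀ j ∈ t, (S i ∩ T j).Nonempty) :
    #s * #t ≤ #(s.biUnion S ∩ t.biUnion T) := by
  rw [biUnion_inter_biUnion, ← card_product]
  refine card_le_card_biUnion ?_ fun p hp ↦ ?_
  · rw [coe_product]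
    exact pairwiseDisjoint_prod_inf hS hT
  · obtain ⟨hi, hj⟩ := mem_product.1 hp
    exact h p.1 hi p.2 hj

theorem card_inter_le_one_of_isChain_of_isAntichain {r : α → α → Prop} {s t : Finset α}
    (hs : IsChain r (s : Set α)) (ht : IsAntichain r (t : Set α)) : #(s ∩ t) ≤ 1 := by
  rw [card_le_one_iff_subsingleton, coe_inter]
  exact inter_subsingleton_of_isChain_of_isAntichain hs ht

end Families

section Orthogonal

variable {α ι κ : Type*} [Fintype α] [DecidableEq α] [Fintype ι] [Fintype κ]

/-- Orthogonality of two families of pairwise disjoint sets: together they cover the whole type, and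
every member of one meets every member of the other. The members are arbitrary finite sets, so that
the notion is symmetric; it is used with chains on one side and antichains on the other. -/
structure OrthogonalFamilies (S : ι → Finset α) (T : κ → Finset α) : Prop where
  disjoint_left : Pairwise (Function.onFun Disjoint S)
  disjoint_right : Pairwise (Function.onFun Disjoint T)
  cover : univ.biUnion S ∪ univ.biUnion T = univ
  inter_nonempty : ∀ i j, (S i ∩ T j).Nonempty

namespace OrthogonalFamilies

variable {S : ι → Finset α} {T : κ → Finset α}

theorem symm (h : OrthogonalFamilies S T) : OrthogonalFamilies T S where
  disjoint_left := h.disjoint_right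
  disjoint_right := h.disjoint_left
  cover := by rw [union_comm, h.cover]
  inter_nonempty j i := by simpa only [inter_comm] using h.inter_nonempty i j

theorem card_add_card_mul_card_le (h : OrthogonalFamilies S T) :
    Fintype.card α + Fintype.card ι * Fintype.card κ ≤
      #(univ.biUnion S) + #(univ.biUnion T) :=
  calc
    Fintype.card α + Fintype.card ι * Fintype.card κ
      ≤ #(univ.biUnion S ∪ univ.biUnion T) + #(univ.biUnion S ∩ univ.biUnion T) := by
        rw [h.cover]
        exact Nat.add_le_add_left (card_mul_card_le_card_biUnion_inter_biUnion
          (h.disjoint_left.set_pairwise _) (h.disjoint_right.set_pairwise _)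
          fun i _ j _ ↦ h.inter_nonempty i j) _
    _ = #(univ.biUnion S) + #(univ.biUnion T) := card_union_add_card_inter _ _

end OrthogonalFamilies

theorem card_biUnion_add_card_biUnion_le {S : ι → Finset α} {T : κ → Finset α}
    (h : ∀ i j, #(S i ∩ T j) ≤ 1) :
    #(univ.biUnion S) + #(univ.biUnion T) ≤
      Fintype.card α + Fintype.card ι * Fintype.card κ :=
  calc
    #(univ.biUnion S) + #(univ.biUnion T)
      = #(univ.biUnion S ∪ univ.biUnion T) + #(univ.biUnion S ∩ univ.biUnion T) :=
        (card_union_add_card_inter _ _).symm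
    _ ≤ Fintype.card α + Fintype.card ι * Fintype.card κ * 1 :=
        Nat.add_le_add (card_le_univ _)
          (card_biUnion_inter_biUnion_le_mul fun i _ j _ ↦ h i j)
    _ = Fintype.card α + Fintype.card ι * Fintype.card κ := by rw [mul_one]

theorem OrthogonalFamilies.card_biUnion_le {S S' : ι → Finset α} {T : κ → Finset α}
    (h : OrthogonalFamilies S T) (hS' : ∀ i j, #(S' i ∩ T j) ≤ 1) :
    #(univ.biUnion S') ≤ #(univ.biUnion S) :=
  Nat.le_of_add_le_add_right <|
    (card_biUnion_add_card_biUnion_le hS').trans h.card_add_card_mul_card_le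

theorem orthogonal_families_are_maximal_general (r : α → α → Prop) {C : ι → Finset α}
    {A : κ → Finset α} (hC : ∀ i, IsChain r (C i : Set α))
    (hA : ∀ j, IsAntichain r (A j : Set α)) (h : OrthogonalFamilies C A) :
    (∀ C' : ι → Finset α, (∀ i, IsChain r (C' i : Set α)) →
      #(univ.biUnion C') ≤ #(univ.biUnion C)) ∧
    (∀ A' : κ → Finset α, (∀ j, IsAntichain r (A' j : Set α)) →
      #(univ.biUnion A') ≤ #(univ.biUnion A)) := by
  refine ⟨fun C' hC' ↦ h.card_biUnion_le fun i j ↦ ?_,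
    fun A' hA' ↦ h.symm.card_biUnion_le fun j i ↦ ?_⟩
  · exact card_inter_le_one_of_isChain_of_isAntichain (hC' i) (hA j)
  · rw [inter_comm]
    exact card_inter_le_one_of_isChain_of_isAntichain (hC i) (hA' j)

end Orthogonal

section Maxima

variable {α : Type*} [PartialOrder α] [Fintype α] [DecidableEq α]

theorem card_biUnion_eq_cMax {l : ℕ} {C : Fin l → Finset α}
    (hC : ∀ i, IsChain (· ≤ ·) (C i : Set α)) (hCd : Pairwise (Function.onFun Disjoint C))
    (hmax : ∀ C' : Fin l → Finset α, (∀ i, IsChain (· ≤ ·) (C' i : Set α)) →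
      #(univ.biUnion C') ≤ #(univ.biUnion C)) :
    #(univ.biUnion C) = cMax α l := by
  symm
  apply IsGreatest.csSup_eq
  refine ⟨⟨C, hC, hCd, rfl⟩, ?_⟩
  rintro _ ⟨C', hC', -, rfl⟩
  exact hmax C' hC'

theorem card_biUnion_eq_aMax {k : ℕ} {A : Fin k → Finset α}
    (hA : ∀ j, IsAntichain (· ≤ ·) (A j : Set α)) (hAd : Pairwise (Function.onFun Disjoint A))
    (hmax : ∀ A' : Fin k → Finset α, (∀ j, IsAntichain (· ≤ ·) (A' j : Set α)) →
      #(univ.biUnion A') ≤ #(univ.biUnion A)) :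
    #(univ.biUnion A) = aMax α k := by
  symm
  apply IsGreatest.csSup_eq
  refine ⟨⟨A, hA, hAd, rfl⟩, ?_⟩
  rintro _ ⟨A', hA', -, rfl⟩
  exact hmax A' hA'

end Maxima

theorem orthogonal_families_are_maximal
    (α : Type*) [PartialOrder α] [Fintype α] [DecidableEq α]
    (l k : ℕ) (C : Fin l → Finset α) (A : Fin k → Finset α)
    (hC : ∀ i, IsChain (· ≤ ·) (↑(C i) : Set α))
    (hCd : Pairwise (Function.onFun Disjoint C))
    (hA : ∀ j, IsAntichain (· ≤ ·) (↑(A j) : Set α))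
    (hAd : Pairwise (Function.onFun Disjoint A))
    (hcover : Finset.univ.biUnion C ∪ Finset.univ.biUnion A = Finset.univ)
    (hmeet : ∀ i j, (C i ∩ A j).Nonempty) :
    (Finset.univ.biUnion C).card = cMax α l ∧
    (Finset.univ.biUnion A).card = aMax α k := by
  obtain ⟨hCmax, hAmax⟩ :=
    orthogonal_families_are_maximal_general (· ≤ ·) hC hA ⟨hCd, hAd, hcover, hmeet⟩
  exact ⟨card_biUnion_eq_cMax hC hCd hCmax, card_biUnion_eq_aMax hA hAd hAmax⟩
end
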